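/- The undirected angles at the two nodes of the construction tree satisfy ∠ A₁' F₁₂ A₂' = π − θ and ∠ A₄ F₃₄ A₃ = π − θ. -/

import Mathlib

open Real EuclideanGeometry

noncomputable def pt (x y : ℝ) : EuclideanSpace ℝ (Fin 2) :=
  (WithLp.equiv 2 (Fin 2 → ℝ)).symm ![x, y]

/-!
Each node lies on the perpendicular bisector of a parallel side, at distance `tan (θ / 2)` times
half the length of that side from its midpoint. It is therefore the apex of an isosceles triangle
on that side with base angles `θ / 2`, and the angle sum of the triangle leaves `π - θ` at the apex.
-/

section IsoscelesTriangle

variable {V P : Type*} [NormedAddCommGroup V] [InnerProductSpace ℝ V] [MetricSpace P]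
  [NormedAddTorsor V P] {p₁ p₂ p₃ : P}

theorem angle_apex_eq_pi_sub_two_mul_of_dist_eq (h : dist p₁ p₂ = dist p₁ p₃) (h₂₁ : p₂ ≠ p₁) :
    ∠ p₂ p₁ p₃ = π - 2 * ∠ p₁ p₂ p₃ := by
  have angle_sum : ∠ p₁ p₂ p₃ + ∠ p₂ p₃ p₁ + ∠ p₃ p₁ p₂ = π :=
    angle_add_angle_add_angle_eq_pi p₃ h₂₁
  have base_angles : ∠ p₁ p₂ p₃ = ∠ p₂ p₃ p₁ :=
    (angle_eq_angle_of_dist_eq h).trans (angle_comm p₁ p₃ p₂)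
  rw [angle_comm p₂ p₁ p₃]
  linarith

theorem angle_base_eq_arctan_of_dist_eq (h : dist p₁ p₂ = dist p₁ p₃) (h₂₃ : p₂ ≠ p₃) :
    ∠ p₁ p₂ p₃ = arctan (dist p₁ (midpoint ℝ p₂ p₃) / dist p₂ (midpoint ℝ p₂ p₃)) := by
  have base_ray : ∠ p₁ p₂ (midpoint ℝ p₂ p₃) = ∠ p₁ p₂ p₃ :=
    (sbtw_midpoint_of_ne ℝ h₂₃).angle_eq_right p₁
  rw [← base_ray, angle_comm]
  exact angle_eq_arctan_of_angle_eq_pi_div_two (angle_left_midpoint_eq_pi_div_two_of_dist_eq h)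
    (sbtw_midpoint_of_ne ℝ h₂₃).left_ne

theorem angle_apex_eq_pi_sub_two_mul_arctan_of_dist_eq (h : dist p₁ p₂ = dist p₁ p₃)
    (h₂₃ : p₂ ≠ p₃) :
    ∠ p₂ p₁ p₃ =
      π - 2 * arctan (dist p₁ (midpoint ℝ p₂ p₃) / dist p₂ (midpoint ℝ p₂ p₃)) := by
  have h₂₁ : p₂ ≠ p₁ := by
    rintro rfl
    exact h₂₃ (dist_eq_zero.mp (h.symm.trans (dist_self p₂)))
  rw [angle_apex_eq_pi_sub_two_mul_of_dist_eq h h₂₁, angle_base_eq_arctan_of_dist_eq h h₂₃]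

end IsoscelesTriangle

theorem dist_pt_pt (x y x' y' : ℝ) :
    dist (pt x y) (pt x' y') = √((x - x') ^ 2 + (y - y') ^ 2) := by
  simp [pt, EuclideanSpace.dist_eq, Fin.sum_univ_two, Real.dist_eq]

theorem midpoint_pt_pt (x y x' y' : ℝ) :
    midpoint ℝ (pt x y) (pt x' y') = pt ((x + x') / 2) ((y + y') / 2) := by
  ext i
  fin_cases i <;> simp [pt, midpoint_eq_smul_add, div_eq_inv_mul, mul_add]

theorem angle_pt_neg_pt_zero_pt_eq_pi_sub_two_mul_arctan {h : ℝ} (hh : h ≠ 0) (y z : ℝ) :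
    ∠ (pt (-h) y) (pt 0 z) (pt h y) = π - 2 * arctan |(z - y) / h| := by
  have legs_eq : dist (pt 0 z) (pt (-h) y) = dist (pt 0 z) (pt h y) := by
    simp only [dist_pt_pt, zero_sub, neg_neg, neg_sq]
  have base_ne : pt (-h) y ≠ pt h y := fun heq =>
    hh (self_eq_neg.mp (by simpa [pt] using congrArg (· 0) heq.symm))
  have midpoint_eq : midpoint ℝ (pt (-h) y) (pt h y) = pt 0 y := by
    simp [midpoint_pt_pt]
  have altitude_eq : dist (pt 0 z) (pt 0 y) = |z - y| := by
    simp [dist_pt_pt, sqrt_sq_eq_abs]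
  have half_base_eq : dist (pt (-h) y) (pt 0 y) = |h| := by
    simp [dist_pt_pt, sqrt_sq_eq_abs]
  rw [angle_apex_eq_pi_sub_two_mul_arctan_of_dist_eq legs_eq base_ne, midpoint_eq, altitude_eq,
    half_base_eq, abs_div]

theorem angle_pt_neg_pt_zero_pt_eq_pi_sub_of_abs_eq {h θ : ℝ} (hh : h ≠ 0) (hθ : θ ∈ Set.Ico 0 π)
    {y z : ℝ} (hz : |z - y| = |h * tan (θ / 2)|) :
    ∠ (pt (-h) y) (pt 0 z) (pt h y) = π - θ := by
  obtain ⟨hθ₀, hθπ⟩ := hθ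
  have tan_nonneg : 0 ≤ tan (θ / 2) :=
    tan_nonneg_of_nonneg_of_le_pi_div_two (by linarith) (by linarith)
  have slope_eq : |(z - y) / h| = tan (θ / 2) := by
    rw [abs_div, hz, abs_mul, mul_div_cancel_left₀ _ (abs_ne_zero.mpr hh), abs_of_nonneg tan_nonneg]
  rw [angle_pt_neg_pt_zero_pt_eq_pi_sub_two_mul_arctan hh, slope_eq,
    arctan_tan (by linarith) (by linarith)]
  ring

theorem two_mul_arctan_mem_Ico {t : ℝ} (ht : 0 ≤ t) : 2 * arctan t ∈ Set.Ico 0 π :=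
  ⟨mul_nonneg zero_le_two (arctan_nonneg.mpr ht), by linarith [arctan_lt_pi_div_two t]⟩

theorem stmt_3_general {a12 a34 θ : ℝ} (d : ℝ) (ha12 : a12 ≠ 0) (ha34 : a34 ≠ 0)
    (hθ : θ ∈ Set.Ico 0 π) :
    ∠ (pt (-(a12 / 2)) d) (pt 0 (d - a12 / 2 * tan (θ / 2))) (pt (a12 / 2) d) = π - θ ∧
      ∠ (pt (-(a34 / 2)) 0) (pt 0 (a34 / 2 * tan (θ / 2))) (pt (a34 / 2) 0) = π - θ :=
  ⟨angle_pt_neg_pt_zero_pt_eq_pi_sub_of_abs_eq (by simpa using ha12) hθ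
      (by rw [sub_sub_cancel_left, abs_neg]),
    angle_pt_neg_pt_zero_pt_eq_pi_sub_of_abs_eq (by simpa using ha34) hθ (by rw [sub_zero])⟩

theorem stmt_3 (a12 a34 d θ : ℝ) (ha12 : 0 < a12) (ha34 : 0 < a34)
    (hd : max a12 a34 < d)
    (hθ : θ = 2 * Real.arctan ((a12 + a34) / (2 * d)))
    (A₁' A₂' A₃ A₄ F₁₂ F₃₄ : EuclideanSpace ℝ (Fin 2))
    (hA₁ : A₁' = pt (-(a12 / 2)) d) (hA₂ : A₂' = pt (a12 / 2) d)
    (hA₃ : A₃ = pt (a34 / 2) 0) (hA₄ : A₄ = pt (-(a34 / 2)) 0)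
    (hF₁₂ : F₁₂ = pt 0 (d - a12 / 2 * Real.tan (θ / 2)))
    (hF₃₄ : F₃₄ = pt 0 (a34 / 2 * Real.tan (θ / 2))) :
    ∠ A₁' F₁₂ A₂' = π - θ ∧ ∠ A₄ F₃₄ A₃ = π - θ := by
  have hd₀ : 0 < d := (ha12.trans_le (le_max_left _ _)).trans hd
  subst hA₁ hA₂ hA₃ hA₄ hF₁₂ hF₃₄ hθ
  exact stmt_3_general d ha12.ne' ha34.ne' (two_mul_arctan_mem_Ico (by positivity))
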